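/- arXiv:2202.11862 — 5 statements merged into one kernel-verified Lean document; each statement's English description precedes it below -/
import Mathlib

section
/- Let X be a finite type, let p be a pmf on X, and let x ∈ X. Then the infimum over all pmfs μ on X of D(μ‖p) + D(μ‖δ_x) equals log(1/p(x)) (the surprisal, or negative log-likelihood, of the event X = x under p), where δ_x is the point mass at x, and where both sides are interpreted in [0,∞] (so in particular both sides are ∞ when p(x) = 0). -/
open scoped BigOperators ENNReal

/-- A probability mass function on a finite type, as a nonnegative
real-valued function summing to 1. -/
def IsPMF {X : Type*} [Fintype X] (μ : X → ℝ) : Prop :=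
  (∀ x, 0 ≤ μ x) ∧ ∑ x, μ x = 1

open Classical in
/-- Relative entropy (KL divergence) `D(μ‖ν) = Σ_x μ(x) log(μ(x)/ν(x))`,
valued in `[0,∞]`, with the conventions `0 · log(0/a) = 0` and
`t · log(t/0) = ∞` for `t > 0`. -/
noncomputable def KLdiv {X : Type*} [Fintype X] (μ ν : X → ℝ) : ℝ≥0∞ :=
  if ∀ x, ν x = 0 → μ x = 0 then
    ENNReal.ofReal (∑ x, μ x * Real.log (μ x / ν x))
  else ⊤

/-- The point mass at `x`. -/
def deltaPMF {X : Type*} [DecidableEq X] (x : X) : X → ℝ :=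
  fun y => if y = x then 1 else 0

section PointMass

variable {X : Type*} [DecidableEq X] {x y : X}

theorem deltaPMF_self (x : X) : deltaPMF x x = 1 :=
  if_pos rfl

theorem deltaPMF_of_ne (h : y ≠ x) : deltaPMF x y = 0 :=
  if_neg h

theorem deltaPMF_eq_zero_iff : deltaPMF x y = 0 ↔ y ≠ x := by
  simp [deltaPMF]

variable [Fintype X]

theorem isPMF_deltaPMF (x : X) : IsPMF (deltaPMF x) := by
  refine ⟨fun y => ?_, by simp [deltaPMF]⟩
  rcases eq_or_ne y x with rfl | hy
  · simp [deltaPMF_self]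
  · exact (deltaPMF_of_ne hy).ge

theorem eq_deltaPMF_of_sum_eq_one {μ : X → ℝ} (hsum : ∑ y, μ y = 1)
    (hzero : ∀ y, y ≠ x → μ y = 0) : μ = deltaPMF x := by
  have hx : μ x = 1 := (Fintype.sum_eq_single x hzero).symm.trans hsum
  funext y
  rcases eq_or_ne y x with rfl | hy
  · rw [hx, deltaPMF_self]
  · rw [hzero y hy, deltaPMF_of_ne hy]

theorem KLdiv_deltaPMF_left (x : X) (ν : X → ℝ) :
    KLdiv (deltaPMF x) ν = if ν x = 0 then ⊤ else ENNReal.ofReal (Real.log (1 / ν x)) := by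
  have hac : (∀ y, ν y = 0 → deltaPMF x y = 0) ↔ ν x ≠ 0 := by
    simp only [deltaPMF_eq_zero_iff]
    exact ⟨fun h hx => h x hx rfl, fun hx y hy hyx => hx (hyx ▸ hy)⟩
  have hsum : ∑ y, deltaPMF x y * Real.log (deltaPMF x y / ν y) = Real.log (1 / ν x) := by
    rw [Fintype.sum_eq_single x fun y hy => by rw [deltaPMF_of_ne hy, zero_mul],
      deltaPMF_self, one_mul]
  simp only [KLdiv, hac, hsum, ite_not]

theorem KLdiv_deltaPMF_self (x : X) : KLdiv (deltaPMF x) (deltaPMF x) = 0 := by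
  simp [KLdiv_deltaPMF_left, deltaPMF_self]

theorem KLdiv_deltaPMF_right_of_ne {μ : X → ℝ} (hsum : ∑ y, μ y = 1) (hne : μ ≠ deltaPMF x) :
    KLdiv μ (deltaPMF x) = ⊤ :=
  if_neg fun hac =>
    hne (eq_deltaPMF_of_sum_eq_one hsum fun y hy => hac y (deltaPMF_of_ne hy))

theorem iInf_add_KLdiv_deltaPMF (F : (X → ℝ) → ℝ≥0∞) (x : X) :
    (⨅ μ : {μ : X → ℝ // IsPMF μ}, F μ.1 + KLdiv μ.1 (deltaPMF x)) = F (deltaPMF x) := by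
  apply le_antisymm
  · refine (iInf_le _ ⟨deltaPMF x, isPMF_deltaPMF x⟩).trans_eq ?_
    rw [KLdiv_deltaPMF_self, add_zero]
  · refine le_iInf fun ⟨μ, hμ⟩ => ?_
    rcases eq_or_ne μ (deltaPMF x) with rfl | hne
    · exact le_self_add
    · rw [KLdiv_deltaPMF_right_of_ne hμ.2 hne, add_top]
      exact le_top

end PointMass

/-- Surprisal as inconsistency: the inconsistency of believing both the
distribution `p` and the event `X = x` is the surprisal `log(1/p(x))`,
both sides being `∞` when `p(x) = 0`. -/
theorem surprisal_as_inconsistency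
    {X : Type*} [Fintype X] [DecidableEq X]
    (p : X → ℝ) (hp : IsPMF p) (x : X) :
    (⨅ μ : {μ : X → ℝ // IsPMF μ}, KLdiv μ.1 p + KLdiv μ.1 (deltaPMF x))
      = (if p x = 0 then ⊤ else ENNReal.ofReal (Real.log (1 / p x))) := by
  rw [iInf_add_KLdiv_deltaPMF (KLdiv · p), KLdiv_deltaPMF_left]
end

section
/- Let X and Y be finite types, let f, h : X → Y be functions (true labeling function and deterministic predictor), let D be a pmf on X, and let r, s, β > 0. Let A := {x : f(x) = h(x)} and suppose D(A) := Σ_{x ∈ A} D(x) > 0. Then the infimum, over all pmfs μ on X × Y (with X-marginal μ_X and conditionals μ(·|x) for μ_X(x) > 0), of β·D(μ_X‖D) + r·Σ_{x : μ_X(x)>0} μ_X(x)·D( μ(·|x) ‖ δ_{h(x)} ) + s·Σ_{x : μ_X(x)>0} μ_X(x)·D( μ(·|x) ‖ δ_{f(x)} ) equals −β·log D(A), i.e., β times the negative log of the accuracy of h; in particular the value is independent of r and s. -/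
open scoped BigOperators ENNReal

/-!
The penalty of a predictor `g` is `0` when the joint distribution `μ` lives on the graph of `g` and
`∞` otherwise. A finite cost therefore forces `μ` onto the graphs of both `f` and `h`, so that its
first marginal lives on `A = {f = h}`; conversely any distribution on `A` lifts to such a `μ`. What
remains is the information projection of `D` onto the distributions carried by `A`: by the log-sum
inequality the minimal relative entropy is `-log D(A)`, attained at `D` conditioned on `A`.
-/

section LogSum

-- The tangent line of `t ↦ t * log t` at `c`, evaluated at `t = p / q` and scaled by `q`.
theorem mul_log_add_sub_le_mul_log_div {p q c : ℝ} (hp : 0 ≤ p) (hq : 0 ≤ q) (hc : 0 < c)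
    (hpq : q = 0 → p = 0) : p * Real.log c + (p - c * q) ≤ p * Real.log (p / q) := by
  rcases hp.eq_or_lt with rfl | hp
  · simpa using mul_nonneg hc.le hq
  · have hq : 0 < q := hq.lt_of_ne' (mt hpq hp.ne')
    have hlog : 1 - (p / q / c)⁻¹ ≤ Real.log (p / q) - Real.log c := by
      rw [← Real.log_div (by positivity) hc.ne']
      exact Real.one_sub_inv_le_log_of_pos (by positivity)
    calc p * Real.log c + (p - c * q)
        = p * (Real.log c + (1 - (p / q / c)⁻¹)) := by field_simp
      _ ≤ p * Real.log (p / q) := by gcongr; linarith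

theorem log_sum_inequality {ι : Type*} (s : Finset ι) {p q : ι → ℝ} (hp : ∀ i ∈ s, 0 ≤ p i)
    (hq : ∀ i ∈ s, 0 ≤ q i) (hpq : ∀ i ∈ s, q i = 0 → p i = 0) :
    (∑ i ∈ s, p i) * Real.log ((∑ i ∈ s, p i) / ∑ i ∈ s, q i) ≤
      ∑ i ∈ s, p i * Real.log (p i / q i) := by
  set P := ∑ i ∈ s, p i with hP
  set Q := ∑ i ∈ s, q i with hQ
  rcases (Finset.sum_nonneg hp).eq_or_lt with hP0 | hP0
  · have hp0 : ∀ i ∈ s, p i = 0 := (Finset.sum_eq_zero_iff_of_nonneg hp).1 hP0.symm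
    have hsum : ∑ i ∈ s, p i * Real.log (p i / q i) = 0 :=
      Finset.sum_eq_zero fun i hi => by rw [hp0 i hi, zero_mul]
    rw [hsum, ← hP0.trans hP.symm, zero_mul]
  · have hQ0 : 0 < Q := (Finset.sum_nonneg hq).lt_of_ne' fun hQ0 => hP0.ne' <|
      Finset.sum_eq_zero fun i hi =>
        hpq i hi ((Finset.sum_eq_zero_iff_of_nonneg hq).1 hQ0 i hi)
    calc P * Real.log (P / Q)
        = ∑ i ∈ s, (p i * Real.log (P / Q) + (p i - P / Q * q i)) := by
          rw [Finset.sum_add_distrib, Finset.sum_sub_distrib, ← Finset.sum_mul, ← Finset.mul_sum,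
            ← hP, ← hQ, div_mul_cancel₀ P hQ0.ne', sub_self, add_zero]
      _ ≤ ∑ i ∈ s, p i * Real.log (p i / q i) := Finset.sum_le_sum fun i hi =>
          mul_log_add_sub_le_mul_log_div (hp i hi) (hq i hi) (div_pos hP0 hQ0) (hpq i hi)

end LogSum

section KLdiv

variable {X : Type*} [Fintype X] {μ ν : X → ℝ}

theorem KLdiv_of_absolutelyContinuous (h : ∀ x, ν x = 0 → μ x = 0) :
    KLdiv μ ν = ENNReal.ofReal (∑ x, μ x * Real.log (μ x / ν x)) :=
  if_pos h

theorem KLdiv_eq_top {x : X} (hν : ν x = 0) (hμ : μ x ≠ 0) : KLdiv μ ν = ⊤ :=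
  if_neg fun h => hμ (h x hν)

theorem KLdiv_self (μ : X → ℝ) : KLdiv μ μ = 0 := by
  have hlog (x : X) : Real.log (μ x / μ x) = 0 := by
    rcases eq_or_ne (μ x) 0 with hx | hx <;> simp [hx]
  simp [KLdiv_of_absolutelyContinuous, hlog]

theorem ofReal_log_inv_sum_le_KLdiv (hμ : IsPMF μ) (hν : ∀ x, 0 ≤ ν x) {s : Finset X}
    (hs : ∀ x ∉ s, μ x = 0) : ENNReal.ofReal (Real.log (1 / ∑ x ∈ s, ν x)) ≤ KLdiv μ ν := by
  by_cases hac : ∀ x, ν x = 0 → μ x = 0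
  · have hμs : ∑ x ∈ s, μ x = 1 :=
      (Finset.sum_subset s.subset_univ fun x _ hx => hs x hx).trans hμ.2
    rw [KLdiv_of_absolutelyContinuous hac]
    refine ENNReal.ofReal_le_ofReal ?_
    calc Real.log (1 / ∑ x ∈ s, ν x)
        = (∑ x ∈ s, μ x) * Real.log ((∑ x ∈ s, μ x) / ∑ x ∈ s, ν x) := by rw [hμs, one_mul]
      _ ≤ ∑ x ∈ s, μ x * Real.log (μ x / ν x) :=
          log_sum_inequality s (fun x _ => hμ.1 x) (fun x _ => hν x) fun x _ => hac x
      _ = ∑ x, μ x * Real.log (μ x / ν x) :=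
          Finset.sum_subset s.subset_univ fun x _ hx => by rw [hs x hx, zero_mul]
  · push Not at hac
    obtain ⟨x, hνx, hμx⟩ := hac
    rw [KLdiv_eq_top hνx hμx]
    exact le_top

end KLdiv

section CondOn

variable {X : Type*} [DecidableEq X]

/-- The distribution `ν` conditioned on the event `s`, the minimizer of `KLdiv · ν` among the
distributions carried by `s`; it is zero when `s` has mass zero. -/
noncomputable def condOn (ν : X → ℝ) (s : Finset X) (x : X) : ℝ :=
  if x ∈ s then ν x / ∑ i ∈ s, ν i else 0

theorem condOn_of_notMem (ν : X → ℝ) {s : Finset X} {x : X} (hx : x ∉ s) : condOn ν s x = 0 :=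
  if_neg hx

theorem sum_condOn [Fintype X] {ν : X → ℝ} {s : Finset X} (hs : ∑ x ∈ s, ν x ≠ 0) :
    ∑ x, condOn ν s x = 1 := by
  simp only [condOn, Finset.sum_ite_mem, Finset.univ_inter]
  rw [← Finset.sum_div, div_self hs]

theorem isPMF_condOn [Fintype X] {ν : X → ℝ} (hν : ∀ x, 0 ≤ ν x) {s : Finset X}
    (hs : ∑ x ∈ s, ν x ≠ 0) : IsPMF (condOn ν s) :=
  ⟨fun x => ite_nonneg (div_nonneg (hν x) (Finset.sum_nonneg fun i _ => hν i)) le_rfl,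
    sum_condOn hs⟩

theorem KLdiv_condOn [Fintype X] {ν : X → ℝ} {s : Finset X} (hs : ∑ x ∈ s, ν x ≠ 0) :
    KLdiv (condOn ν s) ν = ENNReal.ofReal (Real.log (1 / ∑ x ∈ s, ν x)) := by
  have hac (x : X) (hx : ν x = 0) : condOn ν s x = 0 := by simp [condOn, hx]
  have hterm (x : X) : condOn ν s x * Real.log (condOn ν s x / ν x) =
      condOn ν s x * Real.log (1 / ∑ x ∈ s, ν x) := by
    by_cases hx : x ∈ s
    · rcases eq_or_ne (ν x) 0 with hνx | hνx
      · rw [hac x hνx, zero_mul, zero_mul]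
      · rw [condOn, if_pos hx, div_right_comm, div_self hνx]
    · rw [condOn_of_notMem ν hx, zero_mul, zero_mul]
  rw [KLdiv_of_absolutelyContinuous hac, Finset.sum_congr rfl fun x _ => hterm x,
    ← Finset.sum_mul, sum_condOn hs, one_mul]

end CondOn

section Joint

variable {X Y : Type*}

/-- The joint distribution `μ` is carried by the graph of `g`; for nonnegative `μ` this says that
its conditionals are the point masses `δ_{g x}`. -/
def IsSupportedOnGraph (μ : X × Y → ℝ) (g : X → Y) : Prop :=
  ∀ x y, y ≠ g x → μ (x, y) = 0

/-- The joint distribution of `(x, g x)` when `x` is distributed according to `p`: the lift of `p`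
that the deterministic predictor `g` incurs no penalty on. -/
def graphJoint [DecidableEq Y] (p : X → ℝ) (g : X → Y) (z : X × Y) : ℝ :=
  if z.2 = g z.1 then p z.1 else 0

theorem isSupportedOnGraph_graphJoint [DecidableEq Y] {p : X → ℝ} {f g : X → Y}
    (hfg : ∀ x, f x ≠ g x → p x = 0) : IsSupportedOnGraph (graphJoint p g) f := by
  intro x y hy
  by_cases hyg : y = g x
  · rw [graphJoint, if_pos hyg, hfg x (hyg ▸ hy.symm)]
  · exact if_neg hyg

variable [Fintype Y]

/-- The marginal on `X` of a joint distribution on `X × Y`, written `μ_X` on paper. -/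
def fstMarginal (μ : X × Y → ℝ) (x : X) : ℝ :=
  ∑ y, μ (x, y)

theorem isPMF_fstMarginal [Fintype X] {μ : X × Y → ℝ} (hμ : IsPMF μ) : IsPMF (fstMarginal μ) :=
  ⟨fun _ => Finset.sum_nonneg fun _ _ => hμ.1 _, (Fintype.sum_prod_type μ).symm.trans hμ.2⟩

theorem IsSupportedOnGraph.fstMarginal_eq {μ : X × Y → ℝ} {g : X → Y}
    (hμ : IsSupportedOnGraph μ g) (x : X) : fstMarginal μ x = μ (x, g x) :=
  Fintype.sum_eq_single (g x) fun y hy => hμ x y hy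

theorem IsSupportedOnGraph.fstMarginal_eq_zero {μ : X × Y → ℝ} {f g : X → Y}
    (hf : IsSupportedOnGraph μ f) (hg : IsSupportedOnGraph μ g) {x : X} (hx : f x ≠ g x) :
    fstMarginal μ x = 0 :=
  (hf.fstMarginal_eq x).trans (hg x (f x) hx)

theorem fstMarginal_graphJoint [DecidableEq Y] (p : X → ℝ) (g : X → Y) :
    fstMarginal (graphJoint p g) = p := by
  funext x
  simp [fstMarginal, graphJoint]

theorem isPMF_graphJoint [Fintype X] [DecidableEq Y] {p : X → ℝ} (hp : IsPMF p) (g : X → Y) :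
    IsPMF (graphJoint p g) := by
  refine ⟨fun z => ite_nonneg (hp.1 z.1) le_rfl, ?_⟩
  calc ∑ z, graphJoint p g z
      = ∑ x, fstMarginal (graphJoint p g) x := Fintype.sum_prod_type _
    _ = 1 := by rw [fstMarginal_graphJoint, hp.2]

/-- The relative entropy of the conditionals of `μ` given the first coordinate with respect to the
kernel `κ`, averaged over the first marginal of `μ`. The sum skips the points of marginal zero,
where the quotient defining the conditional is meaningless. -/
noncomputable def condKLdiv [Fintype X] (μ : X × Y → ℝ) (κ : X → Y → ℝ) : ℝ≥0∞ :=
  ∑ x with 0 < fstMarginal μ x,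
    ENNReal.ofReal (fstMarginal μ x) * KLdiv (fun y => μ (x, y) / fstMarginal μ x) (κ x)

variable [Fintype X] [DecidableEq Y] {μ : X × Y → ℝ} {g : X → Y}

theorem IsSupportedOnGraph.condKLdiv_deltaPMF (hμ : IsSupportedOnGraph μ g) :
    condKLdiv μ (fun x => deltaPMF (g x)) = 0 := by
  refine Finset.sum_eq_zero fun x hx => ?_
  have hpos : 0 < fstMarginal μ x := (Finset.mem_filter.1 hx).2
  have hcond : (fun y => μ (x, y) / fstMarginal μ x) = deltaPMF (g x) := by
    funext y
    rcases eq_or_ne y (g x) with rfl | hy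
    · rw [← hμ.fstMarginal_eq x, div_self hpos.ne', deltaPMF, if_pos rfl]
    · rw [hμ x y hy, zero_div, deltaPMF, if_neg hy]
  rw [hcond, KLdiv_self, mul_zero]

theorem condKLdiv_deltaPMF_eq_top (hμ : ∀ z, 0 ≤ μ z) (hg : ¬IsSupportedOnGraph μ g) :
    condKLdiv μ (fun x => deltaPMF (g x)) = ⊤ := by
  simp only [IsSupportedOnGraph, not_forall] at hg
  obtain ⟨x, y, hy, hxy⟩ := hg
  have hpos : 0 < fstMarginal μ x :=
    Finset.sum_pos' (fun _ _ => hμ _) ⟨y, Finset.mem_univ y, (hμ _).lt_of_ne' hxy⟩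
  have htop : KLdiv (fun y => μ (x, y) / fstMarginal μ x) (deltaPMF (g x)) = ⊤ :=
    KLdiv_eq_top (if_neg hy) (div_ne_zero hxy hpos.ne')
  refine ENNReal.sum_eq_top.2 ⟨x, Finset.mem_filter.2 ⟨Finset.mem_univ x, hpos⟩, ?_⟩
  rw [htop, ENNReal.mul_top (ENNReal.ofReal_pos.2 hpos).ne']

end Joint

/-- Log accuracy as inconsistency: the inconsistency of believing a
deterministic predictor `h`, a true labelling function `f` (each with any
positive confidences `r`, `s`) and the input distribution `D` with
confidence `β` equals `β` times the negative log accuracy of `h`;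
in particular it does not depend on `r` and `s`. -/
theorem log_accuracy_as_inconsistency
    {X Y : Type*} [Fintype X] [Fintype Y] [DecidableEq X] [DecidableEq Y]
    (f h : X → Y) (D : X → ℝ) (hD : IsPMF D)
    (r s β : ℝ) (hr : 0 < r) (hs : 0 < s) (hβ : 0 < β)
    (DA : ℝ) (hDA : DA = ∑ x ∈ Finset.univ.filter (fun x => f x = h x), D x)
    (hDApos : 0 < DA) :
    (⨅ μ : {μ : X × Y → ℝ // IsPMF μ},
        ENNReal.ofReal β * KLdiv (fun x => ∑ y, μ.1 (x, y)) D
        + ENNReal.ofReal r *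
            ∑ x ∈ Finset.univ.filter (fun x => 0 < ∑ y, μ.1 (x, y)),
              ENNReal.ofReal (∑ y, μ.1 (x, y)) *
                KLdiv (fun y => μ.1 (x, y) / ∑ y', μ.1 (x, y')) (deltaPMF (h x))
        + ENNReal.ofReal s *
            ∑ x ∈ Finset.univ.filter (fun x => 0 < ∑ y, μ.1 (x, y)),
              ENNReal.ofReal (∑ y, μ.1 (x, y)) *
                KLdiv (fun y => μ.1 (x, y) / ∑ y', μ.1 (x, y')) (deltaPMF (f x)))
      = ENNReal.ofReal (β * Real.log (1 / DA)) := by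
  set A := Finset.univ.filter fun x => f x = h x
  have hA {x : X} : x ∉ A ↔ f x ≠ h x := by simp [A]
  have hDA0 : ∑ x ∈ A, D x ≠ 0 := hDA ▸ hDApos.ne'
  change (⨅ μ : {μ : X × Y → ℝ // IsPMF μ},
      ENNReal.ofReal β * KLdiv (fstMarginal μ.1) D
      + ENNReal.ofReal r * condKLdiv μ.1 (fun x => deltaPMF (h x))
      + ENNReal.ofReal s * condKLdiv μ.1 (fun x => deltaPMF (f x))) = _
  rw [hDA, ENNReal.ofReal_mul hβ.le]
  apply le_antisymm
  · have hh : IsSupportedOnGraph (graphJoint (condOn D A) h) h :=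
      isSupportedOnGraph_graphJoint fun _ hx => absurd rfl hx
    have hf : IsSupportedOnGraph (graphJoint (condOn D A) h) f :=
      isSupportedOnGraph_graphJoint fun _ hx => condOn_of_notMem D (hA.2 hx)
    refine (iInf_le _ ⟨_, isPMF_graphJoint (isPMF_condOn hD.1 hDA0) h⟩).trans_eq ?_
    simp only [hh.condKLdiv_deltaPMF, hf.condKLdiv_deltaPMF, fstMarginal_graphJoint,
      KLdiv_condOn hDA0, mul_zero, add_zero]
  · refine le_iInf fun ⟨μ, hμ⟩ => ?_
    by_cases hh : IsSupportedOnGraph μ h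
    · by_cases hf : IsSupportedOnGraph μ f
      · have hμA : ∀ x ∉ A, fstMarginal μ x = 0 := fun x hx => hf.fstMarginal_eq_zero hh (hA.1 hx)
        simp only [hh.condKLdiv_deltaPMF, hf.condKLdiv_deltaPMF, mul_zero, add_zero]
        gcongr
        exact ofReal_log_inv_sum_le_KLdiv (isPMF_fstMarginal hμ) hD.1 hμA
      · simp [condKLdiv_deltaPMF_eq_top hμ.1 hf, ENNReal.mul_top, hs]
    · simp [condKLdiv_deltaPMF_eq_top hμ.1 hh, ENNReal.mul_top, hr]
end

section
/- Let X be a finite type, D a pmf on X, f, h : X → ℝ, s, t : X → ℝ with s(x) > 0 and t(x) > 0 for all x, and β₁, β₂ > 0. For each x let N(m,σ²) denote the Gaussian probability measure on ℝ with mean m and variance σ², and let KL denote the Kullback–Leibler divergence between probability measures on ℝ. Then the infimum, over all families (μ_x)_{x ∈ X} of probability measures on ℝ, of Σ_x D(x)·[ β₁·KL( μ_x ‖ N(f(x), s(x)²) ) + β₂·KL( μ_x ‖ N(h(x), t(x)²) ) ] equals Σ_x D(x)·[ (β₁+β₂)·log( QM(x)/GM(x) ) + (1/2)·(β₁β₂/(β₁+β₂))·(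 (f(x) − h(x)) / QM(x) )² ], where QM(x) := sqrt( (β₂·s(x)² + β₁·t(x)²) / (β₁+β₂) ) and GM(x) := s(x)^{β₂/(β₁+β₂)} · t(x)^{β₁/(β₁+β₂)} are the weighted quadratic and geometric means of s(x) and t(x) with weights (β₂, β₁)/(β₁+β₂). -/
open scoped BigOperators ENNReal NNReal
open MeasureTheory ProbabilityTheory

open Classical in
/-- Kullback–Leibler divergence `∫ log(dμ/dν) dμ ∈ [0,∞]` between measures
on `ℝ`, equal to `∞` when `μ` is not absolutely continuous with respect to
`ν` (or when the log-density is not integrable). -/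
noncomputable def klDivM (μ ν : Measure ℝ) : ℝ≥0∞ :=
  if μ ≪ ν ∧ Integrable (fun y => Real.log (μ.rnDeriv ν y).toReal) μ then
    ENNReal.ofReal (∫ y, Real.log ((μ.rnDeriv ν y).toReal) ∂μ)
  else ⊤

/-!
For each `x` let `π` be the Gaussian whose density is proportional to the weighted geometric mean
of the two given densities. Then `β₁ log (dπ/dν₁) + β₂ log (dπ/dν₂)` is a constant `C`, so that
`β₁ KL(μ‖ν₁) + β₂ KL(μ‖ν₂) = (β₁ + β₂) KL(μ‖π) + C` as soon as the left side is finite. The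
minimum is therefore `C`, attained at `μ = π`, and completing the square evaluates `C`.
-/

open InformationTheory

lemma klDivM_eq_klDiv {μ ν : Measure ℝ} (h : μ Set.univ = ν Set.univ) :
    klDivM μ ν = klDiv μ ν := by
  have h_real : μ.real Set.univ = ν.real Set.univ := congrArg ENNReal.toReal h
  rw [klDivM, klDiv_def, h_real]
  simp only [add_sub_cancel_right, llr_def]
  congr

lemma iInf_pi_tsum_mul_eq {X : Type*} {ι : X → Type*} {F : ∀ x, ι x → ℝ≥0∞} {c : X → ℝ≥0∞}
    (w : X → ℝ≥0∞) (h : ∀ x, IsLeast (Set.range (F x)) (c x)) :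
    ⨅ i : ∀ x, ι x, ∑' x, w x * F x (i x) = ∑' x, w x * c x := by
  choose i hi using fun x => (h x).1
  refine le_antisymm ?_ (le_iInf fun j => ?_)
  · exact (iInf_le _ i).trans_eq (by simp only [hi])
  · exact ENNReal.tsum_le_tsum fun x => mul_le_mul_right ((h x).2 ⟨j x, rfl⟩) (w x)

section LogPool

variable {α : Type*} [MeasurableSpace α]

lemma llr_eq_llr_add_llr {μ ν κ : Measure α} [SigmaFinite μ] [SigmaFinite ν] [SigmaFinite κ]
    (hμν : μ ≪ ν) (hμκ : μ ≪ κ) : llr μ κ =ᵐ[μ] llr μ ν + llr ν κ := by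
  filter_upwards [hμκ.ae_le (Measure.rnDeriv_mul_rnDeriv (κ := κ) hμν), Measure.rnDeriv_pos hμκ,
    hμν.ae_le (Measure.rnDeriv_ne_top μ ν), hμκ.ae_le (Measure.rnDeriv_ne_top ν κ)]
    with y h_mul h_pos h_top h_top'
  rw [← h_mul, Pi.mul_apply] at h_pos
  obtain ⟨h_ne, h_ne'⟩ := mul_ne_zero_iff.mp h_pos.ne'
  rw [Pi.add_apply, llr, llr, llr, ← h_mul, Pi.mul_apply, ENNReal.toReal_mul,
    Real.log_mul (ENNReal.toReal_ne_zero.mpr ⟨h_ne, h_top⟩)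
      (ENNReal.toReal_ne_zero.mpr ⟨h_ne', h_top'⟩)]

/-- `π` is the logarithmic opinion pool of `ν₁` and `ν₂` with weights `β₁` and `β₂`: its density is
proportional to the weighted geometric mean of theirs. In logarithmic form this says that a
weighted sum of log-likelihood ratios is a constant `C`, which is the minimal weighted divergence
from `ν₁` and `ν₂`. -/
structure IsLogPool (π ν₁ ν₂ : Measure α) (β₁ β₂ C : ℝ) : Prop where
  ac_left : π ≪ ν₁
  ac_right : π ≪ ν₂
  weighted_llr : ∀ᵐ y ∂π, β₁ * llr π ν₁ y + β₂ * llr π ν₂ y = C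

namespace IsLogPool

variable {π ν₁ ν₂ : Measure α} {β₁ β₂ C : ℝ}

lemma symm (h : IsLogPool π ν₁ ν₂ β₁ β₂ C) : IsLogPool π ν₂ ν₁ β₂ β₁ C where
  ac_left := h.ac_right
  ac_right := h.ac_left
  weighted_llr := h.weighted_llr.mono fun _ hy => (add_comm _ _).trans hy

-- `-llr π νᵢ ≤ dνᵢ/dπ` bounds both log-likelihood ratios from below by integrable functions;
-- since their weighted sum is constant, this also bounds each of them from above.
lemma klDiv_left_ne_top [IsFiniteMeasure π] [IsFiniteMeasure ν₁] [IsFiniteMeasure ν₂]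
    (h : IsLogPool π ν₁ ν₂ β₁ β₂ C) (hβ₁ : 0 < β₁) (hβ₂ : 0 ≤ β₂) : klDiv π ν₁ ≠ ∞ := by
  have neg_llr_le {ν : Measure α} [IsFiniteMeasure ν] (hν : π ≪ ν) :
      ∀ᵐ y ∂π, -llr π ν y ≤ (ν.rnDeriv π y).toReal := by
    filter_upwards [exp_neg_llr hν] with y hy
    linarith [Real.add_one_le_exp (-llr π ν y)]
  refine klDiv_ne_top h.ac_left (integrable_of_le_of_le
    (g₁ := fun y => -(ν₁.rnDeriv π y).toReal)
    (g₂ := fun y => β₁⁻¹ * (C + β₂ * (ν₂.rnDeriv π y).toReal))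
    (measurable_llr π ν₁).aestronglyMeasurable ?_ ?_ Measure.integrable_toReal_rnDeriv.neg
    (((integrable_const C).add (Measure.integrable_toReal_rnDeriv.const_mul β₂)).const_mul β₁⁻¹))
  · filter_upwards [neg_llr_le h.ac_left] with y hy
    exact neg_le.mp hy
  · filter_upwards [neg_llr_le h.ac_right, h.weighted_llr] with y hy hC
    rw [le_inv_mul_iff₀ hβ₁]
    linarith [mul_le_mul_of_nonneg_left hy hβ₂]

variable [IsProbabilityMeasure π] [IsProbabilityMeasure ν₁] [IsProbabilityMeasure ν₂]

lemma weighted_toReal_klDiv (h : IsLogPool π ν₁ ν₂ β₁ β₂ C) {μ : Measure α}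
    [IsProbabilityMeasure μ] (hμ : μ ≪ π) (h₁ : klDiv μ ν₁ ≠ ∞) (h₂ : klDiv μ ν₂ ≠ ∞) :
    β₁ * (klDiv μ ν₁).toReal + β₂ * (klDiv μ ν₂).toReal
      = (β₁ + β₂) * (klDiv μ π).toReal + C := by
  obtain ⟨hμ₁, h_int₁⟩ := klDiv_ne_top_iff.mp h₁
  obtain ⟨hμ₂, h_int₂⟩ := klDiv_ne_top_iff.mp h₂
  have h_llr : (fun y => β₁ * llr μ ν₁ y + β₂ * llr μ ν₂ y)
      =ᵐ[μ] fun y => (β₁ + β₂) * llr μ π y + C := by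
    filter_upwards [llr_eq_llr_add_llr hμ hμ₁, llr_eq_llr_add_llr hμ hμ₂,
      hμ.ae_le h.weighted_llr] with y hy₁ hy₂ hC
    rw [hy₁, hy₂, Pi.add_apply, Pi.add_apply]
    linear_combination hC
  have h_int : Integrable (fun y => (β₁ + β₂) * llr μ π y) μ := by
    have h_int_add_const := ((h_int₁.const_mul β₁).add (h_int₂.const_mul β₂)).congr h_llr
    simpa only [Pi.sub_def, add_sub_cancel_right] using h_int_add_const.sub (integrable_const C)
  have toReal_eq {ν : Measure α} [IsProbabilityMeasure ν] (hν : μ ≪ ν) :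
      (klDiv μ ν).toReal = ∫ y, llr μ ν y ∂μ :=
    toReal_klDiv_of_measure_eq hν (by simp only [measure_univ])
  calc β₁ * (klDiv μ ν₁).toReal + β₂ * (klDiv μ ν₂).toReal
      = ∫ y, (β₁ * llr μ ν₁ y + β₂ * llr μ ν₂ y) ∂μ := by
        rw [integral_add (h_int₁.const_mul β₁) (h_int₂.const_mul β₂), integral_const_mul,
          integral_const_mul, toReal_eq hμ₁, toReal_eq hμ₂]
    _ = ∫ y, ((β₁ + β₂) * llr μ π y + C) ∂μ := integral_congr_ae h_llr
    _ = (β₁ + β₂) * (klDiv μ π).toReal + C := by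
        rw [integral_add h_int (integrable_const C), integral_const_mul, integral_const,
          probReal_univ, one_smul, toReal_eq hμ]

lemma weighted_toReal_klDiv_self (h : IsLogPool π ν₁ ν₂ β₁ β₂ C) (hβ₁ : 0 < β₁) (hβ₂ : 0 < β₂) :
    β₁ * (klDiv π ν₁).toReal + β₂ * (klDiv π ν₂).toReal = C := by
  rw [h.weighted_toReal_klDiv .rfl (h.klDiv_left_ne_top hβ₁ hβ₂.le)
    (h.symm.klDiv_left_ne_top hβ₂ hβ₁.le), klDiv_self, ENNReal.toReal_zero, mul_zero, zero_add]

lemma const_nonneg (h : IsLogPool π ν₁ ν₂ β₁ β₂ C) (hβ₁ : 0 < β₁) (hβ₂ : 0 < β₂) : 0 ≤ C := by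
  rw [← h.weighted_toReal_klDiv_self hβ₁ hβ₂]
  positivity

lemma isLeast_weighted_klDiv (h : IsLogPool π ν₁ ν₂ β₁ β₂ C) (hν₁ : ν₁ ≪ π)
    (hβ₁ : 0 < β₁) (hβ₂ : 0 < β₂) :
    IsLeast (Set.range fun μ : {m : Measure α // IsProbabilityMeasure m} =>
      ENNReal.ofReal β₁ * klDiv μ.1 ν₁ + ENNReal.ofReal β₂ * klDiv μ.1 ν₂)
      (ENNReal.ofReal C) := by
  have sum_eq {μ : Measure α} (h₁ : klDiv μ ν₁ ≠ ∞) (h₂ : klDiv μ ν₂ ≠ ∞) :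
      ENNReal.ofReal β₁ * klDiv μ ν₁ + ENNReal.ofReal β₂ * klDiv μ ν₂
        = ENNReal.ofReal (β₁ * (klDiv μ ν₁).toReal + β₂ * (klDiv μ ν₂).toReal) := by
    rw [ENNReal.ofReal_add (by positivity) (by positivity), ENNReal.ofReal_mul hβ₁.le,
      ENNReal.ofReal_mul hβ₂.le, ENNReal.ofReal_toReal h₁, ENNReal.ofReal_toReal h₂]
  constructor
  · refine ⟨⟨π, inferInstance⟩, ?_⟩
    dsimp only
    rw [sum_eq (h.klDiv_left_ne_top hβ₁ hβ₂.le) (h.symm.klDiv_left_ne_top hβ₂ hβ₁.le),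
      h.weighted_toReal_klDiv_self hβ₁ hβ₂]
  · rintro _ ⟨⟨μ, hμ⟩, rfl⟩
    dsimp only
    by_cases h₁ : klDiv μ ν₁ = ∞
    · simp [h₁, ENNReal.mul_top, hβ₁]
    by_cases h₂ : klDiv μ ν₂ = ∞
    · simp [h₂, ENNReal.mul_top, hβ₂]
    have hμπ : μ ≪ π := (klDiv_ne_top_iff.mp h₁).1.trans hν₁
    rw [sum_eq h₁ h₂, h.weighted_toReal_klDiv hμπ h₁ h₂]
    exact ENNReal.ofReal_le_ofReal (le_add_of_nonneg_left (by positivity))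

end IsLogPool

end LogPool

section Gaussian

/-- The Gaussian measure with mean `m` and standard deviation `σ`. -/
noncomputable def gaussianStd (m σ : ℝ) : Measure ℝ :=
  gaussianReal m (.mk (σ ^ 2) (sq_nonneg σ))

instance (m σ : ℝ) : IsProbabilityMeasure (gaussianStd m σ) :=
  inferInstanceAs (IsProbabilityMeasure (gaussianReal m _))

lemma gaussianStd_variance_ne_zero {σ : ℝ} (hσ : σ ≠ 0) : NNReal.mk (σ ^ 2) (sq_nonneg σ) ≠ 0 :=
  fun h => pow_ne_zero 2 hσ (congrArg NNReal.toReal h)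

lemma gaussianStd_absolutelyContinuous_volume (m : ℝ) {σ : ℝ} (hσ : σ ≠ 0) :
    gaussianStd m σ ≪ volume :=
  gaussianReal_absolutelyContinuous m (gaussianStd_variance_ne_zero hσ)

lemma gaussianStd_absolutelyContinuous (m a : ℝ) {σ s : ℝ} (hσ : σ ≠ 0) (hs : s ≠ 0) :
    gaussianStd m σ ≪ gaussianStd a s :=
  (gaussianStd_absolutelyContinuous_volume m hσ).trans
    (gaussianReal_absolutelyContinuous' a (gaussianStd_variance_ne_zero hs))

lemma llr_gaussianStd_volume (m : ℝ) {σ : ℝ} (hσ : σ ≠ 0) :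
    llr (gaussianStd m σ) volume =ᵐ[volume] fun y =>
      -(Real.log (2 * Real.pi) / 2) - Real.log σ - (y - m) ^ 2 / (2 * σ ^ 2) := by
  have h_pi : 2 * Real.pi ≠ 0 := by positivity
  filter_upwards [rnDeriv_gaussianReal m (.mk (σ ^ 2) (sq_nonneg σ))] with y hy
  rw [llr, gaussianStd, hy, toReal_gaussianPDF, gaussianPDFReal, NNReal.coe_mk,
    Real.log_mul (by positivity) (Real.exp_ne_zero _), Real.log_exp, Real.log_inv,
    Real.log_sqrt (by positivity), Real.log_mul h_pi (pow_ne_zero 2 hσ), Real.log_pow]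
  push_cast
  ring

lemma llr_gaussianStd (m a : ℝ) {σ s : ℝ} (hσ : σ ≠ 0) (hs : s ≠ 0) :
    llr (gaussianStd m σ) (gaussianStd a s) =ᵐ[gaussianStd m σ] fun y =>
      Real.log s - Real.log σ + (y - a) ^ 2 / (2 * s ^ 2) - (y - m) ^ 2 / (2 * σ ^ 2) := by
  have h_vol := gaussianStd_absolutelyContinuous_volume m hσ
  filter_upwards [llr_eq_llr_add_llr (gaussianStd_absolutelyContinuous m a hσ hs) h_vol,
    h_vol.ae_le (llr_gaussianStd_volume m hσ), h_vol.ae_le (llr_gaussianStd_volume a hs)]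
    with y h_chain hm ha
  rw [Pi.add_apply, hm, ha] at h_chain
  linarith

/-- The quadratic mean of `s` and `t` with weights `β₂ / (β₁ + β₂)` and `β₁ / (β₁ + β₂)`; the
weights are crossed because the pooled variance is `(s * t / quadraticMean β₁ β₂ s t) ^ 2`. -/
noncomputable def quadraticMean (β₁ β₂ s t : ℝ) : ℝ :=
  √((β₂ * s ^ 2 + β₁ * t ^ 2) / (β₁ + β₂))

/-- The geometric mean of `s` and `t`, with the same crossed weights as in `quadraticMean`. -/
noncomputable def geometricMean (β₁ β₂ s t : ℝ) : ℝ :=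
  s ^ (β₂ / (β₁ + β₂)) * t ^ (β₁ / (β₁ + β₂))

/-- The mean of the logarithmic pool of `N(a, s²)` and `N(b, t²)` with weights `β₁` and `β₂`: the
average of `a` and `b` weighted by the precisions `β₁ / s²` and `β₂ / t²`. -/
noncomputable def pooledMean (β₁ β₂ a b s t : ℝ) : ℝ :=
  (β₁ * a * t ^ 2 + β₂ * b * s ^ 2) / (β₂ * s ^ 2 + β₁ * t ^ 2)

/-- The standard deviation of the logarithmic pool of two Gaussians with standard deviations `s`
and `t`. -/
noncomputable def pooledStd (β₁ β₂ s t : ℝ) : ℝ :=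
  s * t / quadraticMean β₁ β₂ s t

/-- The minimal weighted divergence from the pair `N(a, s²)`, `N(b, t²)`. -/
noncomputable def gaussianInconsistency (β₁ β₂ a b s t : ℝ) : ℝ :=
  (β₁ + β₂) * Real.log (quadraticMean β₁ β₂ s t / geometricMean β₁ β₂ s t)
    + (1 / 2) * (β₁ * β₂ / (β₁ + β₂)) * ((a - b) / quadraticMean β₁ β₂ s t) ^ 2

variable {β₁ β₂ s t : ℝ}

lemma quadraticMean_pos (hβ₁ : 0 < β₁) (hβ₂ : 0 < β₂) (hs : 0 < s) (ht : 0 < t) :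
    0 < quadraticMean β₁ β₂ s t := by
  unfold quadraticMean
  positivity

lemma pooledStd_pos (hβ₁ : 0 < β₁) (hβ₂ : 0 < β₂) (hs : 0 < s) (ht : 0 < t) :
    0 < pooledStd β₁ β₂ s t :=
  div_pos (mul_pos hs ht) (quadraticMean_pos hβ₁ hβ₂ hs ht)

lemma sq_quadraticMean (hβ₁ : 0 < β₁) (hβ₂ : 0 < β₂) :
    quadraticMean β₁ β₂ s t ^ 2 = (β₂ * s ^ 2 + β₁ * t ^ 2) / (β₁ + β₂) :=
  Real.sq_sqrt (by positivity)

lemma log_geometricMean (hs : 0 < s) (ht : 0 < t) :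
    Real.log (geometricMean β₁ β₂ s t)
      = β₂ / (β₁ + β₂) * Real.log s + β₁ / (β₁ + β₂) * Real.log t := by
  rw [geometricMean, Real.log_mul (by positivity) (by positivity), Real.log_rpow hs,
    Real.log_rpow ht]

lemma weighted_log_div_pooledStd (hβ₁ : 0 < β₁) (hβ₂ : 0 < β₂) (hs : 0 < s) (ht : 0 < t) :
    β₁ * (Real.log s - Real.log (pooledStd β₁ β₂ s t))
        + β₂ * (Real.log t - Real.log (pooledStd β₁ β₂ s t))
      = (β₁ + β₂) * Real.log (quadraticMean β₁ β₂ s t / geometricMean β₁ β₂ s t) := by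
  have hQ := quadraticMean_pos hβ₁ hβ₂ hs ht
  have hG : geometricMean β₁ β₂ s t ≠ 0 := by
    unfold geometricMean
    positivity
  rw [pooledStd, Real.log_div (by positivity) hQ.ne', Real.log_mul hs.ne' ht.ne',
    Real.log_div hQ.ne' hG, log_geometricMean hs ht]
  field_simp
  ring

lemma weighted_sq_div_eq_pooled (hβ₁ : 0 < β₁) (hβ₂ : 0 < β₂) (hs : 0 < s) (ht : 0 < t)
    (a b y : ℝ) :
    β₁ * ((y - a) ^ 2 / s ^ 2) + β₂ * ((y - b) ^ 2 / t ^ 2)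
      = (β₁ + β₂) * ((y - pooledMean β₁ β₂ a b s t) ^ 2 / pooledStd β₁ β₂ s t ^ 2)
        + β₁ * β₂ / (β₁ + β₂) * ((a - b) / quadraticMean β₁ β₂ s t) ^ 2 := by
  rw [pooledMean, pooledStd, div_pow, div_pow, sq_quadraticMean hβ₁ hβ₂]
  field_simp
  ring

lemma isLogPool_gaussianStd (hβ₁ : 0 < β₁) (hβ₂ : 0 < β₂) (hs : 0 < s) (ht : 0 < t) (a b : ℝ) :
    IsLogPool (gaussianStd (pooledMean β₁ β₂ a b s t) (pooledStd β₁ β₂ s t))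
      (gaussianStd a s) (gaussianStd b t) β₁ β₂ (gaussianInconsistency β₁ β₂ a b s t) := by
  have hσ := (pooledStd_pos hβ₁ hβ₂ hs ht).ne'
  refine ⟨gaussianStd_absolutelyContinuous _ a hσ hs.ne',
    gaussianStd_absolutelyContinuous _ b hσ ht.ne', ?_⟩
  filter_upwards [llr_gaussianStd (pooledMean β₁ β₂ a b s t) a hσ hs.ne',
    llr_gaussianStd (pooledMean β₁ β₂ a b s t) b hσ ht.ne'] with y hy₁ hy₂
  rw [hy₁, hy₂, gaussianInconsistency]
  linear_combination weighted_log_div_pooledStd hβ₁ hβ₂ hs ht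
    + (1 / 2) * weighted_sq_div_eq_pooled hβ₁ hβ₂ hs ht a b y

lemma gaussianInconsistency_nonneg (hβ₁ : 0 < β₁) (hβ₂ : 0 < β₂) (hs : 0 < s) (ht : 0 < t)
    (a b : ℝ) : 0 ≤ gaussianInconsistency β₁ β₂ a b s t :=
  (isLogPool_gaussianStd hβ₁ hβ₂ hs ht a b).const_nonneg hβ₁ hβ₂

lemma isLeast_weighted_klDivM_gaussianStd (hβ₁ : 0 < β₁) (hβ₂ : 0 < β₂) (hs : 0 < s)
    (ht : 0 < t) (a b : ℝ) :
    IsLeast (Set.range fun μ : {m : Measure ℝ // IsProbabilityMeasure m} =>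
      ENNReal.ofReal β₁ * klDivM μ.1 (gaussianStd a s)
        + ENNReal.ofReal β₂ * klDivM μ.1 (gaussianStd b t))
      (ENNReal.ofReal (gaussianInconsistency β₁ β₂ a b s t)) := by
  have klDivM_eq (μ : {m : Measure ℝ // IsProbabilityMeasure m}) (m σ : ℝ) :
      klDivM μ.1 (gaussianStd m σ) = klDiv μ.1 (gaussianStd m σ) :=
    klDivM_eq_klDiv (by rw [μ.2.measure_univ, measure_univ])
  simp only [klDivM_eq]
  exact (isLogPool_gaussianStd hβ₁ hβ₂ hs ht a b).isLeast_weighted_klDiv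
    (gaussianStd_absolutelyContinuous a _ hs.ne' (pooledStd_pos hβ₁ hβ₂ hs ht).ne') hβ₁ hβ₂

end Gaussian

theorem inconsistency_two_gaussians_general
    {X : Type*} (D : X → ℝ≥0∞) (f h s t : X → ℝ) (hs : ∀ x, 0 < s x) (ht : ∀ x, 0 < t x)
    (β₁ β₂ : ℝ) (hβ₁ : 0 < β₁) (hβ₂ : 0 < β₂) :
    (⨅ μ : X → {m : Measure ℝ // IsProbabilityMeasure m},
        ∑' x, D x *
          (ENNReal.ofReal β₁ *
              klDivM (μ x).1 (gaussianReal (f x) ⟨s x ^ 2, sq_nonneg _⟩)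
            + ENNReal.ofReal β₂ *
              klDivM (μ x).1 (gaussianReal (h x) ⟨t x ^ 2, sq_nonneg _⟩)))
      = ∑' x, D x * ENNReal.ofReal (gaussianInconsistency β₁ β₂ (f x) (h x) (s x) (t x)) :=
  iInf_pi_tsum_mul_eq D fun x =>
    isLeast_weighted_klDivM_gaussianStd hβ₁ hβ₂ (hs x) (ht x) (f x) (h x)

/-- Inconsistency of two conditional Gaussian predictors: the minimal
`D`-expected weighted KL divergence of a family `(μ_x)` of distributions on
`ℝ` from the Gaussians `N(f(x), s(x)²)` and `N(h(x), t(x)²)` (with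
confidences `β₁`, `β₂`) is expressed via the weighted quadratic and
geometric means of the standard deviations. -/
theorem inconsistency_two_gaussians
    {X : Type*} [Fintype X]
    (D : X → ℝ) (hD : (∀ x, 0 ≤ D x) ∧ ∑ x, D x = 1)
    (f h s t : X → ℝ) (hs : ∀ x, 0 < s x) (ht : ∀ x, 0 < t x)
    (β₁ β₂ : ℝ) (hβ₁ : 0 < β₁) (hβ₂ : 0 < β₂)
    (QM GM : X → ℝ)
    (hQM : ∀ x, QM x = Real.sqrt ((β₂ * s x ^ 2 + β₁ * t x ^ 2) / (β₁ + β₂)))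
    (hGM : ∀ x, GM x = s x ^ (β₂ / (β₁ + β₂)) * t x ^ (β₁ / (β₁ + β₂))) :
    (⨅ μ : X → {m : Measure ℝ // IsProbabilityMeasure m},
        ∑ x, ENNReal.ofReal (D x) *
          (ENNReal.ofReal β₁ *
              klDivM (μ x).1 (gaussianReal (f x) ⟨s x ^ 2, sq_nonneg _⟩)
            + ENNReal.ofReal β₂ *
              klDivM (μ x).1 (gaussianReal (h x) ⟨t x ^ 2, sq_nonneg _⟩)))
      = ENNReal.ofReal
          (∑ x, D x *
            ((β₁ + β₂) * Real.log (QM x / GM x)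
              + (1 / 2) * (β₁ * β₂ / (β₁ + β₂)) * ((f x - h x) / QM x) ^ 2)) := by
  obtain rfl : QM = fun x => quadraticMean β₁ β₂ (s x) (t x) := funext hQM
  obtain rfl : GM = fun x => geometricMean β₁ β₂ (s x) (t x) := funext hGM
  have h_nonneg (x : X) : 0 ≤ D x * gaussianInconsistency β₁ β₂ (f x) (h x) (s x) (t x) :=
    mul_nonneg (hD.1 x) (gaussianInconsistency_nonneg hβ₁ hβ₂ (hs x) (ht x) (f x) (h x))
  refine Eq.trans ?_ (ENNReal.ofReal_sum_of_nonneg fun x _ => h_nonneg x).symm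
  simpa only [tsum_fintype, ENNReal.ofReal_mul (hD.1 _)] using
    inconsistency_two_gaussians_general (fun x => ENNReal.ofReal (D x)) f h s t hs ht β₁ β₂ hβ₁ hβ₂
end

section
/- Data processing inequality for PDG divergences: let X, Y be finite types, let k : X → (pmf on Y) be a stochastic map, let p, q be pmfs on X, and let β, ζ > 0. Define the pushforwards (k∘p)(y) := Σ_x p(x)·k(y|x) and (k∘q)(y) := Σ_x q(x)·k(y|x). Then inf over pmfs ν on Y of [ β·D(ν‖k∘p) + ζ·D(ν‖k∘q) ] ≤ inf over pmfs μ on X of [ β·D(μ‖p) + ζ·D(μ‖q) ]; equivalently, Σ_y ( (k∘p)(y)^β · (k∘q)(y)^ζ )^{1/(β+ζ)} ≥ Σ_x ( p(x)^β · q(x)^ζ )^{1/(β+ζ)}. -/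
open scoped BigOperators ENNReal

/-!
Both inequalities compare `∑ x, f (p x) (q x)` with the same sum for the two pushforwards, where
`f` is positively homogeneous. Homogeneity and `∑ y, k x y = 1` give
`∑ x, f (p x) (q x) = ∑ y, ∑ x, f (p x * k x y) (q x * k x y)`,
and for each fixed `y` the inner sum is compared with `f` of the summed arguments: by the log-sum
inequality for `f a b = a * log (a / b)`, and by Hölder's inequality for
`f a b = (a ^ β * b ^ ζ) ^ (1 / (β + ζ))`. The bound on the infima then follows by using the
pushforward of each competitor `μ` on `X` as a competitor on `Y`.
-/

theorem mul_eq_zero_of_mul_eq_zero {M : Type*} [MulZeroClass M] [NoZeroDivisors M] {a b c : M}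
    (hab : b = 0 → a = 0) (h : b * c = 0) : a * c = 0 :=
  mul_eq_zero.2 ((mul_eq_zero.1 h).imp_left hab)

/- At `t = a / b` the graph of `t * log t` lies above its tangent line at `c`; multiply by `b`. -/
theorem mul_log_add_sub_mul_le_mul_log_div {a b c : ℝ} (ha : 0 ≤ a) (hb : 0 ≤ b)
    (hab : b = 0 → a = 0) (hc : 0 < c) :
    a * Real.log c + a - b * c ≤ a * Real.log (a / b) := by
  rcases ha.eq_or_lt with rfl | ha
  · simpa using mul_nonneg hb hc.le
  have hb : 0 < b := hb.lt_of_ne' fun h => ha.ne' (hab h)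
  have hlog : 1 - b * c / a ≤ Real.log (a / b) - Real.log c := by
    rw [← Real.log_div (div_pos ha hb).ne' hc.ne', div_div, ← inv_div]
    exact Real.one_sub_inv_le_log_of_pos (div_pos ha (mul_pos hb hc))
  have hmul : a * (1 - b * c / a) = a - b * c := by field_simp
  linarith [mul_le_mul_of_nonneg_left hlog ha.le]

theorem mul_rpow_mul_mul_rpow_rpow {a b c β ζ : ℝ} (ha : 0 ≤ a) (hb : 0 ≤ b) (hc : 0 ≤ c)
    (hβ : 0 < β) (hζ : 0 < ζ) :
    ((a * c) ^ β * (b * c) ^ ζ) ^ (1 / (β + ζ)) = (a ^ β * b ^ ζ) ^ (1 / (β + ζ)) * c := by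
  have hβζ : 0 < β + ζ := add_pos hβ hζ
  calc ((a * c) ^ β * (b * c) ^ ζ) ^ (1 / (β + ζ))
      = (a ^ β * b ^ ζ * c ^ (β + ζ)) ^ (1 / (β + ζ)) := by
        rw [Real.mul_rpow ha hc, Real.mul_rpow hb hc, Real.rpow_add_of_nonneg hc hβ.le hζ.le,
          mul_mul_mul_comm]
    _ = (a ^ β * b ^ ζ) ^ (1 / (β + ζ)) * c := by
        rw [Real.mul_rpow (by positivity) (by positivity), one_div,
          Real.rpow_rpow_inv hc hβζ.ne']

section SumInequalities

variable {ι : Type*} (s : Finset ι) {a b : ι → ℝ}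

theorem sum_mul_log_sum_div_sum_le (ha : ∀ i ∈ s, 0 ≤ a i) (hb : ∀ i ∈ s, 0 ≤ b i)
    (hab : ∀ i ∈ s, b i = 0 → a i = 0) :
    (∑ i ∈ s, a i) * Real.log ((∑ i ∈ s, a i) / ∑ i ∈ s, b i) ≤
      ∑ i ∈ s, a i * Real.log (a i / b i) := by
  rcases (Finset.sum_nonneg ha).eq_or_lt with hA | hA
  · have ha0 : ∀ i ∈ s, a i = 0 := (Finset.sum_eq_zero_iff_of_nonneg ha).1 hA.symm
    rw [← hA, zero_mul, Finset.sum_eq_zero fun i hi => by rw [ha0 i hi, zero_mul]]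
  have hB : 0 < ∑ i ∈ s, b i := (Finset.sum_nonneg hb).lt_of_ne' fun hB =>
    hA.ne' <| Finset.sum_eq_zero fun i hi =>
      hab i hi ((Finset.sum_eq_zero_iff_of_nonneg hb).1 hB i hi)
  set A := ∑ i ∈ s, a i
  set B := ∑ i ∈ s, b i
  calc A * Real.log (A / B)
      = A * Real.log (A / B) + A - B * (A / B) := by
        rw [mul_div_cancel₀ A hB.ne', add_sub_cancel_right]
    _ = ∑ i ∈ s, (a i * Real.log (A / B) + a i - b i * (A / B)) := by
        rw [Finset.sum_sub_distrib, Finset.sum_add_distrib, ← Finset.sum_mul, ← Finset.sum_mul]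
    _ ≤ ∑ i ∈ s, a i * Real.log (a i / b i) := Finset.sum_le_sum fun i hi =>
        mul_log_add_sub_mul_le_mul_log_div (ha i hi) (hb i hi) (hab i hi) (div_pos hA hB)

theorem sum_rpow_mul_rpow_rpow_le (ha : ∀ i ∈ s, 0 ≤ a i) (hb : ∀ i ∈ s, 0 ≤ b i)
    {β ζ : ℝ} (hβ : 0 < β) (hζ : 0 < ζ) :
    ∑ i ∈ s, (a i ^ β * b i ^ ζ) ^ (1 / (β + ζ)) ≤
      ((∑ i ∈ s, a i) ^ β * (∑ i ∈ s, b i) ^ ζ) ^ (1 / (β + ζ)) := by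
  have hconj : Real.HolderTriple β⁻¹ ζ⁻¹ (1 / (β + ζ)) := by
    simpa using Real.HolderTriple.of_pos (inv_pos.2 hβ) (inv_pos.2 hζ)
  have hA := Finset.sum_nonneg ha
  have hB := Finset.sum_nonneg hb
  have ha_inv : ∑ i ∈ s, (a i ^ β) ^ β⁻¹ = ∑ i ∈ s, a i :=
    Finset.sum_congr rfl fun i hi => Real.rpow_rpow_inv (ha i hi) hβ.ne'
  have hb_inv : ∑ i ∈ s, (b i ^ ζ) ^ ζ⁻¹ = ∑ i ∈ s, b i :=
    Finset.sum_congr rfl fun i hi => Real.rpow_rpow_inv (hb i hi) hζ.ne'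
  calc ∑ i ∈ s, (a i ^ β * b i ^ ζ) ^ (1 / (β + ζ))
      ≤ (∑ i ∈ s, (a i ^ β) ^ β⁻¹) ^ (1 / (β + ζ) / β⁻¹) *
          (∑ i ∈ s, (b i ^ ζ) ^ ζ⁻¹) ^ (1 / (β + ζ) / ζ⁻¹) :=
        Real.Lr_rpow_le_Lp_mul_Lq_of_nonneg s hconj
          (fun i hi => Real.rpow_nonneg (ha i hi) β) (fun i hi => Real.rpow_nonneg (hb i hi) ζ)
    _ = ((∑ i ∈ s, a i) ^ β * (∑ i ∈ s, b i) ^ ζ) ^ (1 / (β + ζ)) := by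
        rw [ha_inv, hb_inv, Real.mul_rpow (Real.rpow_nonneg hA β) (Real.rpow_nonneg hB ζ),
          ← Real.rpow_mul hA, ← Real.rpow_mul hB, div_inv_eq_mul, div_inv_eq_mul,
          mul_comm β, mul_comm ζ]

end SumInequalities

section Pushforward

variable {X Y : Type*} [Fintype X]

/-- The pushforward `k ∘ p` of a weight function `p` on `X` along a kernel `k`, where `k x y` is the
weight `k(y|x)`. -/
def pushforward (k : X → Y → ℝ) (p : X → ℝ) (y : Y) : ℝ :=
  ∑ x, p x * k x y

variable {k : X → Y → ℝ} {p q μ : X → ℝ}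

theorem pushforward_nonneg {y : Y} (hk : ∀ x, 0 ≤ k x y) (hp : ∀ x, 0 ≤ p x) :
    0 ≤ pushforward k p y :=
  Finset.sum_nonneg fun x _ => mul_nonneg (hp x) (hk x)

theorem pushforward_eq_zero_of_pushforward_eq_zero {y : Y} (hk : ∀ x, 0 ≤ k x y)
    (hp : ∀ x, 0 ≤ p x) (hμp : ∀ x, p x = 0 → μ x = 0) (h : pushforward k p y = 0) :
    pushforward k μ y = 0 :=
  Finset.sum_eq_zero fun x hx => mul_eq_zero_of_mul_eq_zero (hμp x) <|
    (Finset.sum_eq_zero_iff_of_nonneg fun x _ => mul_nonneg (hp x) (hk x)).1 h x hx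

variable [Fintype Y]

theorem sum_pushforward (hk : ∀ x, ∑ y, k x y = 1) (p : X → ℝ) :
    ∑ y, pushforward k p y = ∑ x, p x := by
  simp only [pushforward]
  rw [Finset.sum_comm]
  exact Finset.sum_congr rfl fun x _ => by rw [← Finset.mul_sum, hk, mul_one]

theorem IsPMF.pushforward (hμ : IsPMF μ) (hk : ∀ x, IsPMF (k x)) : IsPMF (pushforward k μ) :=
  ⟨fun y => pushforward_nonneg (fun x => (hk x).1 y) hμ.1,
    (sum_pushforward (fun x => (hk x).2) μ).trans hμ.2⟩

theorem sum_le_sum_pushforward_of_superadditive (hk : ∀ x, ∑ y, k x y = 1) {f : ℝ → ℝ → ℝ}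
    (f_homogeneous : ∀ x y, f (p x * k x y) (q x * k x y) = f (p x) (q x) * k x y)
    (f_superadditive : ∀ y, ∑ x, f (p x * k x y) (q x * k x y) ≤
      f (∑ x, p x * k x y) (∑ x, q x * k x y)) :
    ∑ x, f (p x) (q x) ≤ ∑ y, f (pushforward k p y) (pushforward k q y) :=
  calc ∑ x, f (p x) (q x)
      = ∑ y, pushforward k (fun x => f (p x) (q x)) y := (sum_pushforward hk _).symm
    _ = ∑ y, ∑ x, f (p x * k x y) (q x * k x y) := by simp only [pushforward, f_homogeneous]
    _ ≤ ∑ y, f (pushforward k p y) (pushforward k q y) :=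
        Finset.sum_le_sum fun y _ => f_superadditive y

theorem sum_mul_log_div_pushforward_le (hk : ∀ x, IsPMF (k x)) (hμ : ∀ x, 0 ≤ μ x)
    (hp : ∀ x, 0 ≤ p x) (hμp : ∀ x, p x = 0 → μ x = 0) :
    ∑ y, pushforward k μ y * Real.log (pushforward k μ y / pushforward k p y) ≤
      ∑ x, μ x * Real.log (μ x / p x) := by
  rw [← neg_le_neg_iff, ← Finset.sum_neg_distrib, ← Finset.sum_neg_distrib]
  refine sum_le_sum_pushforward_of_superadditive (f := fun a b => -(a * Real.log (a / b)))
    (fun x => (hk x).2) (fun x y => ?_) (fun y => ?_)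
  · rcases eq_or_ne (k x y) 0 with hkxy | hkxy
    · simp [hkxy]
    · rw [mul_div_mul_right _ _ hkxy]
      ring
  · rw [Finset.sum_neg_distrib, neg_le_neg_iff]
    exact sum_mul_log_sum_div_sum_le Finset.univ
      (fun x _ => mul_nonneg (hμ x) ((hk x).1 y)) (fun x _ => mul_nonneg (hp x) ((hk x).1 y))
      (fun x _ => mul_eq_zero_of_mul_eq_zero (hμp x))

theorem KLdiv_pushforward_le (hk : ∀ x, IsPMF (k x)) (hμ : ∀ x, 0 ≤ μ x) (hp : ∀ x, 0 ≤ p x) :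
    KLdiv (pushforward k μ) (pushforward k p) ≤ KLdiv μ p := by
  by_cases hμp : ∀ x, p x = 0 → μ x = 0
  · have hpush : ∀ y, pushforward k p y = 0 → pushforward k μ y = 0 := fun y =>
      pushforward_eq_zero_of_pushforward_eq_zero (fun x => (hk x).1 y) hp hμp
    rw [KLdiv, KLdiv, if_pos hμp, if_pos hpush]
    exact ENNReal.ofReal_le_ofReal (sum_mul_log_div_pushforward_le hk hμ hp hμp)
  · exact le_top.trans_eq (if_neg hμp).symm

theorem iInf_KLdiv_pushforward_le (hk : ∀ x, IsPMF (k x)) (hp : ∀ x, 0 ≤ p x)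
    (hq : ∀ x, 0 ≤ q x) (b z : ℝ≥0∞) :
    (⨅ ν : {ν : Y → ℝ // IsPMF ν},
        b * KLdiv ν.1 (pushforward k p) + z * KLdiv ν.1 (pushforward k q)) ≤
      ⨅ μ : {μ : X → ℝ // IsPMF μ}, b * KLdiv μ.1 p + z * KLdiv μ.1 q := by
  refine le_iInf fun ⟨μ, hμ⟩ => iInf_le_of_le ⟨pushforward k μ, hμ.pushforward hk⟩ ?_
  gcongr
  · exact KLdiv_pushforward_le hk hμ.1 hp
  · exact KLdiv_pushforward_le hk hμ.1 hq

theorem sum_rpow_mul_rpow_le_sum_pushforward (hk : ∀ x, IsPMF (k x)) (hp : ∀ x, 0 ≤ p x)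
    (hq : ∀ x, 0 ≤ q x) {β ζ : ℝ} (hβ : 0 < β) (hζ : 0 < ζ) :
    ∑ x, (p x ^ β * q x ^ ζ) ^ (1 / (β + ζ)) ≤
      ∑ y, (pushforward k p y ^ β * pushforward k q y ^ ζ) ^ (1 / (β + ζ)) :=
  sum_le_sum_pushforward_of_superadditive (f := fun a b => (a ^ β * b ^ ζ) ^ (1 / (β + ζ)))
    (fun x => (hk x).2)
    (fun x y => mul_rpow_mul_mul_rpow_rpow (hp x) (hq x) ((hk x).1 y) hβ hζ)
    (fun y => sum_rpow_mul_rpow_rpow_le Finset.univ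
      (fun x _ => mul_nonneg (hp x) ((hk x).1 y)) (fun x _ => mul_nonneg (hq x) ((hk x).1 y))
      hβ hζ)

end Pushforward

theorem pdg_divergence_data_processing_general
    {X Y : Type*} [Fintype X] [Fintype Y]
    {k : X → Y → ℝ} (hk : ∀ x, IsPMF (k x))
    {p q : X → ℝ} (hp : ∀ x, 0 ≤ p x) (hq : ∀ x, 0 ≤ q x)
    {β ζ : ℝ} (hβ : 0 < β) (hζ : 0 < ζ) :
    (⨅ ν : {ν : Y → ℝ // IsPMF ν},
        ENNReal.ofReal β * KLdiv ν.1 (pushforward k p)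
          + ENNReal.ofReal ζ * KLdiv ν.1 (pushforward k q))
      ≤ (⨅ μ : {μ : X → ℝ // IsPMF μ},
          ENNReal.ofReal β * KLdiv μ.1 p + ENNReal.ofReal ζ * KLdiv μ.1 q)
    ∧ (∑ x, (p x ^ β * q x ^ ζ) ^ (1 / (β + ζ)))
        ≤ (∑ y, (pushforward k p y ^ β * pushforward k q y ^ ζ) ^ (1 / (β + ζ))) :=
  ⟨iInf_KLdiv_pushforward_le hk hp hq _ _,
    sum_rpow_mul_rpow_le_sum_pushforward hk hp hq hβ hζ⟩

/-- Data-processing inequality for PDG divergences: pushing `p` and `q`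
forward along a stochastic map `k` can only decrease the PDG divergence
with confidences `(β, ζ)`; equivalently, the Hellinger-type sum
`Σ (·^β ·^ζ)^{1/(β+ζ)}` can only increase. -/
theorem pdg_divergence_data_processing
    {X Y : Type*} [Fintype X] [Fintype Y]
    (k : X → Y → ℝ) (hk : ∀ x, IsPMF (k x))
    (p q : X → ℝ) (hp : IsPMF p) (hq : IsPMF q)
    (β ζ : ℝ) (hβ : 0 < β) (hζ : 0 < ζ)
    (kp kq : Y → ℝ)
    (hkp : ∀ y, kp y = ∑ x, p x * k x y)
    (hkq : ∀ y, kq y = ∑ x, q x * k x y) :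
    (⨅ ν : {ν : Y → ℝ // IsPMF ν},
        ENNReal.ofReal β * KLdiv ν.1 kp + ENNReal.ofReal ζ * KLdiv ν.1 kq)
      ≤ (⨅ μ : {μ : X → ℝ // IsPMF μ},
          ENNReal.ofReal β * KLdiv μ.1 p + ENNReal.ofReal ζ * KLdiv μ.1 q)
    ∧ (∑ x, (p x ^ β * q x ^ ζ) ^ (1 / (β + ζ)))
        ≤ (∑ y, (kp y ^ β * kq y ^ ζ) ^ (1 / (β + ζ))) := by
  obtain rfl : kp = pushforward k p := funext hkp
  obtain rfl : kq = pushforward k q := funext hkq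
  exact pdg_divergence_data_processing_general hk hp.1 hq.1 hβ hζ
end

section
/- Let Ω be a nonempty finite type, let J be a finite index set, let φ_j : Ω → ℝ with φ_j(ω) > 0 for all j ∈ J and ω ∈ Ω, and let θ_j ∈ ℝ for j ∈ J. Then the infimum, over all pmfs μ on Ω, of Σ_j θ_j · Σ_ω μ(ω)·log( 1/φ_j(ω) ) − H(μ) equals −log Z, where Z := Σ_ω Π_j φ_j(ω)^{θ_j} is the partition function; the infimum is attained uniquely at the Gibbs distribution μ*(ω) := (1/Z)·Π_j φ_j(ω)^{θ_j}. (In PDG terms: the 1-inconsistency of the PDG associated to a weighted factor graph equals minus the log partition function, i.e., the free energy.) -/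
open scoped BigOperators

/-!
Writing `E = ∑ j, θ j * log (1 / φ j)` for the energy of the factor graph, the Gibbs distribution is
`exp (-E) / Z`, so `E` equals `-log Z` minus the logarithm of the Gibbs distribution. Averaging over
`μ` turns the free energy into `-log Z` plus the relative entropy of `μ` with respect to the Gibbs
distribution, which is nonnegative and vanishes only at the Gibbs distribution (Gibbs' inequality).
-/

open InformationTheory (klFun klFun_nonneg klFun_eq_zero_iff)
open Real (exp log)

section RelEntropy

variable {X : Type*} [Fintype X] {p q : X → ℝ}

/-- The relative entropy (Kullback–Leibler divergence) of `p` with respect to `q`, for real-valued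
weights on a finite type. Where `q` vanishes the summand is `0` because of `x / 0 = 0` and
`log 0 = 0`, instead of the usual `+∞` for `p x > 0`; the value is thus meaningful only when `p`
vanishes wherever `q` does. -/
noncomputable def relEntropy (p q : X → ℝ) : ℝ :=
  ∑ x, p x * log (p x / q x)

lemma relEntropy_eq_sum_mul_klFun (hpq : ∀ x, q x = 0 → p x = 0) (hsum : ∑ x, p x = ∑ x, q x) :
    relEntropy p q = ∑ x, q x * klFun (p x / q x) := by
  have summand (x : X) : q x * klFun (p x / q x) = p x * log (p x / q x) + (q x - p x) := by
    have hcancel : q x * (p x / q x) = p x := mul_div_cancel_of_imp' (hpq x)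
    rw [InformationTheory.klFun_apply]
    linear_combination (log (p x / q x) - 1) * hcancel
  simp only [summand, Finset.sum_add_distrib, Finset.sum_sub_distrib, hsum, sub_self, add_zero,
    relEntropy]

lemma mul_klFun_div_nonneg {a b : ℝ} (ha : 0 ≤ a) (hb : 0 ≤ b) : 0 ≤ b * klFun (a / b) :=
  mul_nonneg hb (klFun_nonneg (div_nonneg ha hb))

theorem relEntropy_nonneg (hp : ∀ x, 0 ≤ p x) (hq : ∀ x, 0 ≤ q x)
    (hpq : ∀ x, q x = 0 → p x = 0) (hsum : ∑ x, p x = ∑ x, q x) : 0 ≤ relEntropy p q := by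
  rw [relEntropy_eq_sum_mul_klFun hpq hsum]
  exact Finset.sum_nonneg fun x _ => mul_klFun_div_nonneg (hp x) (hq x)

theorem relEntropy_eq_zero_iff (hp : ∀ x, 0 ≤ p x) (hq : ∀ x, 0 ≤ q x)
    (hpq : ∀ x, q x = 0 → p x = 0) (hsum : ∑ x, p x = ∑ x, q x) :
    relEntropy p q = 0 ↔ p = q := by
  have summand_eq_zero_iff (x : X) : q x * klFun (p x / q x) = 0 ↔ p x = q x := by
    by_cases hx : q x = 0
    · simp [hx, hpq x hx]
    · rw [mul_eq_zero_iff_left hx, klFun_eq_zero_iff (div_nonneg (hp x) (hq x)),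
        div_eq_one_iff_eq hx]
  rw [relEntropy_eq_sum_mul_klFun hpq hsum,
    Fintype.sum_eq_zero_iff_of_nonneg fun x => mul_klFun_div_nonneg (hp x) (hq x)]
  simp only [funext_iff, Pi.zero_apply, summand_eq_zero_iff]

end RelEntropy

section GibbsVariationalPrinciple

variable {Ω : Type*} [Fintype Ω]

/-- The variational free energy of the weight `μ` for the energy function `E` at temperature `1`:
mean energy minus Shannon entropy. -/
noncomputable def freeEnergy (E μ : Ω → ℝ) : ℝ :=
  ∑ ω, μ ω * E ω - ∑ ω, μ ω * log (1 / μ ω)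

/-- The partition function of the energy function `E` at temperature `1`. -/
noncomputable def partitionFunction (E : Ω → ℝ) : ℝ :=
  ∑ ω, exp (-E ω)

/-- The Gibbs (Boltzmann) distribution of the energy function `E` at temperature `1`. -/
noncomputable def gibbsDistribution (E : Ω → ℝ) (ω : Ω) : ℝ :=
  exp (-E ω) / partitionFunction E

variable [Nonempty Ω] (E : Ω → ℝ) {μ : Ω → ℝ}

lemma partitionFunction_pos : 0 < partitionFunction E :=
  Finset.sum_pos (fun _ _ => Real.exp_pos _) Finset.univ_nonempty

lemma gibbsDistribution_pos (ω : Ω) : 0 < gibbsDistribution E ω :=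
  div_pos (Real.exp_pos _) (partitionFunction_pos E)

lemma isPMF_gibbsDistribution : IsPMF (gibbsDistribution E) := by
  refine ⟨fun ω => (gibbsDistribution_pos E ω).le, ?_⟩
  simp only [gibbsDistribution]
  rw [← Finset.sum_div]
  exact div_self (partitionFunction_pos E).ne'

lemma log_gibbsDistribution (ω : Ω) :
    log (gibbsDistribution E ω) = -E ω - log (partitionFunction E) := by
  rw [gibbsDistribution, Real.log_div (Real.exp_ne_zero _) (partitionFunction_pos E).ne',
    Real.log_exp]

theorem freeEnergy_eq_relEntropy_sub_log_partitionFunction (hμ : ∑ ω, μ ω = 1) :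
    freeEnergy E μ = relEntropy μ (gibbsDistribution E) - log (partitionFunction E) := by
  have summand (ω : Ω) : μ ω * E ω - μ ω * log (1 / μ ω) =
      μ ω * log (μ ω / gibbsDistribution E ω) - μ ω * log (partitionFunction E) := by
    rcases eq_or_ne (μ ω) 0 with hω | hω
    · simp [hω]
    · rw [Real.log_div hω (gibbsDistribution_pos E ω).ne', log_gibbsDistribution, one_div,
        Real.log_inv]
      ring
  rw [freeEnergy, ← Finset.sum_sub_distrib, Finset.sum_congr rfl fun ω _ => summand ω,
    Finset.sum_sub_distrib, ← Finset.sum_mul, hμ, one_mul, relEntropy]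

theorem neg_log_partitionFunction_le_freeEnergy (hμ : IsPMF μ) :
    -log (partitionFunction E) ≤ freeEnergy E μ := by
  have hgibbs := isPMF_gibbsDistribution E
  have hnonneg : 0 ≤ relEntropy μ (gibbsDistribution E) :=
    relEntropy_nonneg hμ.1 hgibbs.1 (fun ω h => absurd h (gibbsDistribution_pos E ω).ne')
      (hμ.2.trans hgibbs.2.symm)
  rw [freeEnergy_eq_relEntropy_sub_log_partitionFunction E hμ.2]
  linarith

theorem freeEnergy_eq_neg_log_partitionFunction_iff (hμ : IsPMF μ) :
    freeEnergy E μ = -log (partitionFunction E) ↔ μ = gibbsDistribution E := by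
  have hgibbs := isPMF_gibbsDistribution E
  rw [freeEnergy_eq_relEntropy_sub_log_partitionFunction E hμ.2, sub_eq_neg_self]
  exact relEntropy_eq_zero_iff hμ.1 hgibbs.1 (fun ω h => absurd h (gibbsDistribution_pos E ω).ne')
    (hμ.2.trans hgibbs.2.symm)

lemma freeEnergy_gibbsDistribution :
    freeEnergy E (gibbsDistribution E) = -log (partitionFunction E) :=
  (freeEnergy_eq_neg_log_partitionFunction_iff E (isPMF_gibbsDistribution E)).2 rfl

theorem iInf_freeEnergy :
    ⨅ μ : {μ : Ω → ℝ // IsPMF μ}, freeEnergy E μ = -log (partitionFunction E) := by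
  have hleast : IsLeast (Set.range fun μ : {μ : Ω → ℝ // IsPMF μ} => freeEnergy E μ)
      (-log (partitionFunction E)) :=
    ⟨⟨⟨_, isPMF_gibbsDistribution E⟩, freeEnergy_gibbsDistribution E⟩,
      Set.forall_mem_range.2 fun μ => neg_log_partitionFunction_le_freeEnergy E μ.2⟩
  exact hleast.csInf_eq

end GibbsVariationalPrinciple

section FactorGraph

variable {Ω J : Type*} [Fintype J]

/-- The energy function of the weighted factor graph `(φ, θ)`, under which the Gibbs distribution
weighs `ω` proportionally to `∏ j, φ j ω ^ θ j`. -/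
noncomputable def factorEnergy (φ : J → Ω → ℝ) (θ : J → ℝ) (ω : Ω) : ℝ :=
  ∑ j, θ j * log (1 / φ j ω)

lemma exp_neg_factorEnergy {φ : J → Ω → ℝ} {ω : Ω} (hφ : ∀ j, 0 < φ j ω) (θ : J → ℝ) :
    exp (-factorEnergy φ θ ω) = ∏ j, φ j ω ^ θ j := by
  rw [factorEnergy, ← Finset.sum_neg_distrib, Real.exp_sum]
  refine Finset.prod_congr rfl fun j _ => ?_
  rw [Real.rpow_def_of_pos (hφ j), one_div, Real.log_inv, mul_neg, neg_neg, mul_comm]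

lemma sum_mul_factorEnergy [Fintype Ω] (φ : J → Ω → ℝ) (θ : J → ℝ) (μ : Ω → ℝ) :
    ∑ ω, μ ω * factorEnergy φ θ ω = ∑ j, θ j * ∑ ω, μ ω * log (1 / φ j ω) := by
  simp only [factorEnergy, Finset.mul_sum, mul_left_comm (μ _)]
  exact Finset.sum_comm

end FactorGraph

/-- Free energy as inconsistency: the minimal variational free energy
`Σ_j θ_j · E_μ[log(1/φ_j)] − H(μ)` over pmfs `μ` on `Ω` equals minus the
log of the partition function `Z = Σ_ω Π_j φ_j(ω)^{θ_j}`, and it is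
attained exactly at the Gibbs distribution `μ*(ω) = (1/Z) Π_j φ_j(ω)^{θ_j}`. -/
theorem free_energy_as_inconsistency
    {Ω J : Type*} [Fintype Ω] [Nonempty Ω] [Fintype J]
    (φ : J → Ω → ℝ) (hφ : ∀ j ω, 0 < φ j ω) (θ : J → ℝ)
    (Z : ℝ) (hZ : Z = ∑ ω, ∏ j, φ j ω ^ θ j)
    (gibbs : Ω → ℝ) (hgibbs : ∀ ω, gibbs ω = (∏ j, φ j ω ^ θ j) / Z)
    (F : (Ω → ℝ) → ℝ)
    (hF : ∀ μ, F μ = (∑ j, θ j * ∑ ω, μ ω * Real.log (1 / φ j ω))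
        - (∑ ω, μ ω * Real.log (1 / μ ω))) :
    (⨅ μ : {μ : Ω → ℝ // IsPMF μ}, F μ.1) = -Real.log Z
    ∧ IsPMF gibbs
    ∧ F gibbs = -Real.log Z
    ∧ (∀ μ : Ω → ℝ, IsPMF μ → F μ = -Real.log Z → μ = gibbs) := by
  set E := factorEnergy φ θ
  have weight_eq (ω : Ω) : ∏ j, φ j ω ^ θ j = exp (-E ω) :=
    (exp_neg_factorEnergy (fun j => hφ j ω) θ).symm
  obtain rfl : Z = partitionFunction E := by
    simp only [hZ, weight_eq, partitionFunction]
  obtain rfl : gibbs = gibbsDistribution E := by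
    funext ω
    rw [hgibbs, weight_eq, gibbsDistribution]
  obtain rfl : F = freeEnergy E := by
    funext μ
    rw [hF, ← sum_mul_factorEnergy, freeEnergy]
  exact ⟨iInf_freeEnergy E, isPMF_gibbsDistribution E, freeEnergy_gibbsDistribution E,
    fun _ hμ => (freeEnergy_eq_neg_log_partitionFunction_iff E hμ).1⟩
end
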